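/- arXiv:1210.6932 — 3 statements merged into one kernel-verified Lean document; each statement's English description precedes it below -/
import Mathlib

section
/- The Casimir operator Υ on bilinear forms of H satisfies the quadratic identity Υ∘Υ = 2Υ + 3·id; equivalently (Υ − 3·id)∘(Υ + id) = 0, so the only possible eigenvalues of Υ are 3 and −1. -/
/-!
Each of the three summands of `Υ` is pullback of `B` along some `Iₛ` in both arguments, so signs
cancel in pairs: in `Υ ∘ Υ` the three diagonal terms `Iₛ Iₛ = -1` each give back `B`, and the six
off-diagonal terms, `Iₛ Iₜ = ±Iᵤ`, give each pullback along `Iᵤ` twice. Hence `Υ² = 2Υ + 3`, and an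
eigenvalue `c` is a root of `(c - 3)(c + 1)`.
-/

open scoped RealInnerProductSpace

/-- The Casimir operator acting on real bilinear forms on `H`:
`(Υ B)(X,Y) = B(I₁X, I₁Y) + B(I₂X, I₂Y) + B(I₃X, I₃Y)`. -/
noncomputable def casimir {H : Type*} [NormedAddCommGroup H] [InnerProductSpace ℝ H]
    (I₁ I₂ I₃ : H →ₗ[ℝ] H) :
    (H →ₗ[ℝ] H →ₗ[ℝ] ℝ) →ₗ[ℝ] (H →ₗ[ℝ] H →ₗ[ℝ] ℝ) where
  toFun B := B.compl₁₂ I₁ I₁ + B.compl₁₂ I₂ I₂ + B.compl₁₂ I₃ I₃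
  map_add' B C := by ext x y; simp [LinearMap.compl₁₂_apply]; ring
  map_smul' r B := by ext x y; simp [LinearMap.compl₁₂_apply]

/-- The Casimir operator `Υ` on bilinear forms of `H` satisfies the quadratic
identity `Υ ∘ Υ = 2Υ + 3·id`; consequently the only possible eigenvalues of `Υ`
are `3` and `-1`. -/
theorem casimir_quadratic_identity {H : Type*} [NormedAddCommGroup H] [InnerProductSpace ℝ H]
    [FiniteDimensional ℝ H] (n : ℕ) (hn : 1 ≤ n) (hdim : Module.finrank ℝ H = 4 * n)
    (I₁ I₂ I₃ : H →ₗ[ℝ] H)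
    (hsq1 : ∀ X : H, I₁ (I₁ X) = -X) (hsq2 : ∀ X : H, I₂ (I₂ X) = -X)
    (hsq3 : ∀ X : H, I₃ (I₃ X) = -X)
    (hI12 : ∀ X : H, I₁ (I₂ X) = I₃ X) (hI21 : ∀ X : H, I₂ (I₁ X) = -(I₃ X))
    (hg1 : ∀ X Y : H, ⟪I₁ X, I₁ Y⟫ = ⟪X, Y⟫)
    (hg2 : ∀ X Y : H, ⟪I₂ X, I₂ Y⟫ = ⟪X, Y⟫)
    (hg3 : ∀ X Y : H, ⟪I₃ X, I₃ Y⟫ = ⟪X, Y⟫) :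
    casimir I₁ I₂ I₃ ∘ₗ casimir I₁ I₂ I₃ =
        (2 : ℝ) • casimir I₁ I₂ I₃ + (3 : ℝ) • LinearMap.id ∧
      ∀ (c : ℝ) (B : H →ₗ[ℝ] H →ₗ[ℝ] ℝ), B ≠ 0 → casimir I₁ I₂ I₃ B = c • B →
        c = 3 ∨ c = -1 := by
  -- The remaining quaternion relations follow from those for `I₁ I₂` and `I₂ I₁`.
  have h13 (X : H) : I₁ (I₃ X) = -(I₂ X) := by rw [← hI12, hsq1]
  have h31 (X : H) : I₃ (I₁ X) = I₂ X := by rw [← hI12, hI21, map_neg, h13, neg_neg]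
  have h32 (X : H) : I₃ (I₂ X) = -(I₁ X) := by rw [← hI12, hsq2, map_neg]
  have h23 (X : H) : I₂ (I₃ X) = I₁ X := by rw [← hI12, hI21, h32, neg_neg]
  have key : casimir I₁ I₂ I₃ ∘ₗ casimir I₁ I₂ I₃ =
      (2 : ℝ) • casimir I₁ I₂ I₃ + (3 : ℝ) • LinearMap.id := by
    ext B x y
    simp [casimir, LinearMap.compl₁₂_apply, hsq1, hsq2, hsq3, hI12, hI21, h13, h31, h32, h23]
    ring
  refine ⟨key, fun c B hB hc => ?_⟩
  have h := LinearMap.congr_fun key B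
  simp only [LinearMap.comp_apply, LinearMap.add_apply, LinearMap.smul_apply,
    LinearMap.id_apply, hc, map_smul] at h
  -- On an eigenvector the identity reads `c² B = (2c + 3) B`.
  have h0 : ((c - 3) * (c + 1)) • B = 0 := by
    ext x y
    have hxy := LinearMap.congr_fun (LinearMap.congr_fun h x) y
    simp only [LinearMap.add_apply, LinearMap.smul_apply, smul_eq_mul,
      LinearMap.zero_apply] at hxy ⊢
    linear_combination hxy
  rcases mul_eq_zero.mp ((smul_eq_zero.mp h0).resolve_right hB) with h | h
  · exact Or.inl (by linarith)
  · exact Or.inr (by linarith)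
end

section
/- A real bilinear form B on H satisfies ΥB = 3B if and only if B(IₛX, IₛY) = B(X,Y) for all X, Y ∈ H and each s = 1, 2, 3. -/
/-!
The forward direction evaluates `ΥB = 3B` at `(X, Y)`, `(I₁X, I₁Y)` and `(I₂X, I₂Y)`. Up to signs,
which cancel in a bilinear form, `id, I₁, I₂, I₃` are permuted by composition with each `Iₛ`, so
the four numbers `B X Y`, `B (Iₛ X) (Iₛ Y)` satisfy a linear system: each of the first three is
the average of the other three numbers. Hence all four are equal. The converse is immediate.
-/

open scoped RealInnerProductSpace

/-- A real bilinear form `B` on `H` satisfies `ΥB = 3B` if and only if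
`B(IₛX, IₛY) = B(X, Y)` for all `X, Y ∈ H` and each `s = 1, 2, 3`. -/
theorem casimir_eq_three_iff_invariant {H : Type*} [NormedAddCommGroup H]
    [InnerProductSpace ℝ H] [FiniteDimensional ℝ H]
    (n : ℕ) (hn : 1 ≤ n) (hdim : Module.finrank ℝ H = 4 * n)
    (I₁ I₂ I₃ : H →ₗ[ℝ] H)
    (hsq1 : ∀ X : H, I₁ (I₁ X) = -X) (hsq2 : ∀ X : H, I₂ (I₂ X) = -X)
    (hsq3 : ∀ X : H, I₃ (I₃ X) = -X)
    (hI12 : ∀ X : H, I₁ (I₂ X) = I₃ X) (hI21 : ∀ X : H, I₂ (I₁ X) = -(I₃ X))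
    (hg1 : ∀ X Y : H, ⟪I₁ X, I₁ Y⟫ = ⟪X, Y⟫)
    (hg2 : ∀ X Y : H, ⟪I₂ X, I₂ Y⟫ = ⟪X, Y⟫)
    (hg3 : ∀ X Y : H, ⟪I₃ X, I₃ Y⟫ = ⟪X, Y⟫)
    (B : H →ₗ[ℝ] H →ₗ[ℝ] ℝ) :
    casimir I₁ I₂ I₃ B = (3 : ℝ) • B ↔
      ∀ X Y : H, B (I₁ X) (I₁ Y) = B X Y ∧ B (I₂ X) (I₂ Y) = B X Y ∧
        B (I₃ X) (I₃ Y) = B X Y := by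
  have h31 : ∀ X : H, I₃ (I₁ X) = I₂ X := fun X => by
    rw [← hI12, hI21, map_neg, ← hI12, hsq1, neg_neg]
  have h32 : ∀ X : H, I₃ (I₂ X) = -(I₁ X) := fun X => by
    rw [← hI12, hsq2, map_neg]
  constructor
  · intro h X Y
    have key : ∀ X Y : H, B (I₁ X) (I₁ Y) + B (I₂ X) (I₂ Y) + B (I₃ X) (I₃ Y)
        = 3 * B X Y := fun X Y => by
      simpa [casimir] using LinearMap.congr_fun (LinearMap.congr_fun h X) Y
    -- Replacing `(X, Y)` by `(IₛX, IₛY)` permutes the four values `B X Y`, `B (IₜX) (IₜY)`,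
    -- since the signs in the products `IₜIₛ` cancel; the differences give the claim.
    have e0 := key X Y
    have e1 := key (I₁ X) (I₁ Y)
    have e2 := key (I₂ X) (I₂ Y)
    simp only [hsq1, hI21, h31, map_neg, LinearMap.neg_apply, neg_neg] at e1
    simp only [hsq2, hI12, h32, map_neg, LinearMap.neg_apply, neg_neg] at e2
    refine ⟨?_, ?_, ?_⟩ <;> linarith
  · intro h
    ext X Y
    obtain ⟨h1, h2, h3⟩ := h X Y
    simp only [casimir, LinearMap.coe_mk, AddHom.coe_mk, LinearMap.add_apply,
      LinearMap.compl₁₂_apply, LinearMap.smul_apply, smul_eq_mul, h1, h2, h3]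
    ring
end

section
/- Suppose H has dimension 4 (the case n = 1). Then for every symmetric real bilinear form B on H, the [3]-component is proportional to the inner product: B_[3](X,Y) = (tr B / 4)·⟪X, Y⟫ for all X, Y ∈ H. -/
/-!
For a unit vector `u`, the vectors `u, I₁u, I₂u, I₃u` form an orthonormal basis of the
four-dimensional space `H`. The sum of `B` over the diagonal of an orthonormal basis does not
depend on the basis (`sum_diag_eq_sum_diag`), so `(B + ΥB)(u, u) = tr B`. By homogeneity
`(B + ΥB)(X, X) = tr B · ⟪X, X⟫` for all `X`, and since both sides come from symmetric
bilinear forms, polarization gives the claim.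
-/

open scoped RealInnerProductSpace

/-- The trace of a bilinear form with respect to the inner product is independent of the
orthonormal basis. -/
lemma sum_diag_eq_sum_diag {H ι κ : Type*} [NormedAddCommGroup H] [InnerProductSpace ℝ H]
    [Fintype ι] [Fintype κ] (e : OrthonormalBasis ι ℝ H) (f : OrthonormalBasis κ ℝ H)
    (B : H →ₗ[ℝ] H →ₗ[ℝ] ℝ) :
    ∑ a, B (e a) (e a) = ∑ i, B (f i) (f i) := by
  calc ∑ a, B (e a) (e a) = ∑ a, ∑ i, ⟪f i, e a⟫ * B (f i) (e a) := by
        refine Finset.sum_congr rfl fun a _ => ?_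
        conv_lhs => enter [1]; rw [← f.sum_repr' (e a)]
        simp
    _ = ∑ i, ∑ a, ⟪f i, e a⟫ * B (f i) (e a) := Finset.sum_comm
    _ = ∑ i, B (f i) (f i) := by
        refine Finset.sum_congr rfl fun i _ => ?_
        conv_rhs => enter [2]; rw [← e.sum_repr' (f i)]
        simp [real_inner_comm]

/-- In dimension 4 (the case `n = 1`), for every symmetric real bilinear
form `B` on `H`, the `[3]`-component `B_[3] = (1/4)(B + ΥB)` is proportional to the
inner product: `B_[3](X,Y) = (tr B / 4)·⟪X, Y⟫`. -/
theorem symmetric_three_component_proportional_to_metric {H : Type*} [NormedAddCommGroup H]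
    [InnerProductSpace ℝ H] [FiniteDimensional ℝ H]
    (hdim : Module.finrank ℝ H = 4)
    (e : OrthonormalBasis (Fin 4) ℝ H)
    (I₁ I₂ I₃ : H →ₗ[ℝ] H)
    (hsq1 : ∀ X : H, I₁ (I₁ X) = -X) (hsq2 : ∀ X : H, I₂ (I₂ X) = -X)
    (hsq3 : ∀ X : H, I₃ (I₃ X) = -X)
    (hI12 : ∀ X : H, I₁ (I₂ X) = I₃ X) (hI21 : ∀ X : H, I₂ (I₁ X) = -(I₃ X))
    (hg1 : ∀ X Y : H, ⟪I₁ X, I₁ Y⟫ = ⟪X, Y⟫)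
    (hg2 : ∀ X Y : H, ⟪I₂ X, I₂ Y⟫ = ⟪X, Y⟫)
    (hg3 : ∀ X Y : H, ⟪I₃ X, I₃ Y⟫ = ⟪X, Y⟫)
    (B : H →ₗ[ℝ] H →ₗ[ℝ] ℝ)
    (hsymm : ∀ X Y : H, B X Y = B Y X) :
    ∀ X Y : H, ((1 / 4 : ℝ) • (B + casimir I₁ I₂ I₃ B)) X Y =
      ((∑ a, B (e a) (e a)) / 4) * ⟪X, Y⟫ := by
  -- each `Iₛ` is skew, being orthogonal with square `-1`
  have skew : ∀ I : H →ₗ[ℝ] H, (∀ X, I (I X) = -X) → (∀ X Y : H, ⟪I X, I Y⟫ = ⟪X, Y⟫) →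
      ∀ X, ⟪X, I X⟫ = 0 := by
    intro I hsq hg X
    have h := hg X (I X)
    rw [hsq, inner_neg_right, real_inner_comm] at h
    have hc := real_inner_comm X (I X)
    linarith
  have s1 := skew I₁ hsq1 hg1
  have s2 := skew I₂ hsq2 hg2
  have s3 := skew I₃ hsq3 hg3
  have h12 : ∀ X, ⟪I₁ X, I₂ X⟫ = 0 := fun X => by
    rw [← hg1, hsq1, hI12, inner_neg_left, s3, neg_zero]
  have h13 : ∀ X, ⟪I₁ X, I₃ X⟫ = 0 := fun X => by
    rw [← hI12, hg1, s2]
  have h23 : ∀ X, ⟪I₂ X, I₃ X⟫ = 0 := fun X => by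
    rw [← neg_neg (I₃ X), ← hI21, inner_neg_right, hg2, s1, neg_zero]
  have unit_case : ∀ u : H, ⟪u, u⟫ = 1 →
      B u u + B (I₁ u) (I₁ u) + B (I₂ u) (I₂ u) + B (I₃ u) (I₃ u) = ∑ a, B (e a) (e a) := by
    intro u hu
    have hon : Orthonormal ℝ ![u, I₁ u, I₂ u, I₃ u] := by
      rw [orthonormal_iff_ite]
      intro i j
      have t1 := real_inner_comm u (I₁ u)
      have t2 := real_inner_comm u (I₂ u)
      have t3 := real_inner_comm u (I₃ u)
      have t12 := real_inner_comm (I₁ u) (I₂ u)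
      have t13 := real_inner_comm (I₁ u) (I₃ u)
      have t23 := real_inner_comm (I₂ u) (I₃ u)
      rw [s1] at t1
      rw [s2] at t2
      rw [s3] at t3
      rw [h12] at t12
      rw [h13] at t13
      rw [h23] at t23
      fin_cases i <;> fin_cases j <;>
        simp [-inner_self_eq_norm_sq_to_K, *]
    have hcard : Fintype.card (Fin 4) = Module.finrank ℝ H := by simp [hdim]
    have hspan := (basisOfOrthonormalOfCardEqFinrank hon hcard).span_eq
    rw [coe_basisOfOrthonormalOfCardEqFinrank] at hspan
    rw [sum_diag_eq_sum_diag e (OrthonormalBasis.mk hon hspan.ge) B]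
    simp [Fin.sum_univ_four]
  have diag : ∀ X : H, B X X + B (I₁ X) (I₁ X) + B (I₂ X) (I₂ X) + B (I₃ X) (I₃ X)
      = (∑ a, B (e a) (e a)) * ⟪X, X⟫ := by
    intro X
    by_cases hX : X = 0
    · simp [hX]
    have hn : ‖X‖ ≠ 0 := norm_ne_zero_iff.mpr hX
    have h := unit_case (‖X‖⁻¹ • X) (by
      rw [real_inner_smul_left, real_inner_smul_right, real_inner_self_eq_norm_sq]
      field_simp)
    simp only [map_smul, LinearMap.smul_apply, smul_eq_mul] at h
    rw [← h, real_inner_self_eq_norm_sq]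
    field_simp
  intro X Y
  -- polarization
  have hXY := diag (X + Y)
  have hX := diag X
  have hY := diag Y
  simp only [map_add, LinearMap.add_apply, inner_add_left, inner_add_right] at hXY
  rw [hsymm Y X, hsymm (I₁ Y) (I₁ X), hsymm (I₂ Y) (I₂ X), hsymm (I₃ Y) (I₃ X),
    real_inner_comm X Y] at hXY
  simp only [casimir, LinearMap.coe_mk, AddHom.coe_mk, LinearMap.smul_apply, LinearMap.add_apply,
    LinearMap.compl₁₂_apply, smul_eq_mul]
  linear_combination (hXY - hX - hY) / 8
end
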